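/- arXiv:1903.08347 — 5 statements merged into one kernel-verified Lean document; each statement's English description precedes it below -/
import Mathlib

section
/- Let B ≥ 1, let r_1, …, r_B be strictly positive reals, and define p_i = (1 − e^{−r_i}) exp(−∑_{k=1}^{i−1} r_k) for 1 ≤ i ≤ B. Then for each i, 1 − ∑_{k=1}^{i} p_k > 0 and r_i = ln( (1 − ∑_{k=1}^{i−1} p_k) / (1 − ∑_{k=1}^{i} p_k) ). In particular, the map (r_1, …, r_B) ↦ (p_1, …, p_B) from (0,∞)^B to ℝ^B is injective. -/
open Real

/-- The probability of detecting a photon in bin `i`, as a function of the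
incident waveform `r` (bins indexed by `Fin B`, with `∑_{k<i}` the sum over
earlier bins). -/
noncomputable def coatesP {B : ℕ} (r : Fin B → ℝ) (i : Fin B) : ℝ :=
  (1 - Real.exp (-(r i))) * Real.exp (-(∑ k ∈ Finset.Iio i, r k))

/-!
The partial products `∏ k ∈ s, exp (-r k)` over initial segments `s` telescope: `coatesP r i` is the
drop of this product when bin `i` is added. Hence the probability `1 - ∑ k ∈ s, coatesP r k` of no
detection in `s` is `exp (-∑ k ∈ s, r k)`, and consecutive survival probabilities have ratio
`exp (r i)`. This recovers `r` from `coatesP r`, so the map is injective.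
-/

theorem filter_lt_eq_Iio_of_isLowerSet {ι : Type*} [Preorder ι] [LocallyFiniteOrderBot ι]
    [DecidableLT ι] {s : Finset ι} (hs : IsLowerSet (s : Set ι)) {i : ι} (hi : i ∈ s) :
    s.filter (· < i) = Finset.Iio i := by
  ext k
  simpa using fun hk : k < i => hs hk.le hi

theorem one_sub_sum_mul_prod_Iio_of_isLowerSet {ι R : Type*} [LinearOrder ι]
    [LocallyFiniteOrderBot ι] [CommRing R] {s : Finset ι} (hs : IsLowerSet (s : Set ι))
    (f : ι → R) :
    1 - ∑ i ∈ s, f i * ∏ k ∈ Finset.Iio i, (1 - f k) = ∏ i ∈ s, (1 - f i) := by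
  rw [Finset.prod_one_sub_ordered]
  congr 1
  refine Finset.sum_congr rfl fun i hi => ?_
  rw [filter_lt_eq_Iio_of_isLowerSet hs hi]

section

variable {B : ℕ} (r : Fin B → ℝ)

theorem one_sub_sum_coatesP_of_isLowerSet {s : Finset (Fin B)}
    (hs : IsLowerSet (s : Set (Fin B))) :
    1 - ∑ k ∈ s, coatesP r k = exp (-∑ k ∈ s, r k) := by
  have exp_neg_sum (t : Finset (Fin B)) : exp (-∑ k ∈ t, r k) = ∏ k ∈ t, exp (-r k) := by
    rw [← Finset.sum_neg_distrib, exp_sum]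
  simpa only [coatesP, exp_neg_sum, sub_sub_cancel] using
    one_sub_sum_mul_prod_Iio_of_isLowerSet hs fun k => 1 - exp (-r k)

theorem one_sub_sum_Iio_coatesP (i : Fin B) :
    1 - ∑ k ∈ Finset.Iio i, coatesP r k = exp (-∑ k ∈ Finset.Iio i, r k) :=
  one_sub_sum_coatesP_of_isLowerSet r (by simpa using isLowerSet_Iio i)

theorem one_sub_sum_Iic_coatesP (i : Fin B) :
    1 - ∑ k ∈ Finset.Iic i, coatesP r k = exp (-∑ k ∈ Finset.Iic i, r k) :=
  one_sub_sum_coatesP_of_isLowerSet r (by simpa using isLowerSet_Iic i)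

theorem one_sub_sum_Iic_coatesP_pos (i : Fin B) :
    0 < 1 - ∑ k ∈ Finset.Iic i, coatesP r k := by
  rw [one_sub_sum_Iic_coatesP]
  exact exp_pos _

theorem eq_log_one_sub_sum_coatesP_div (i : Fin B) :
    r i = log ((1 - ∑ k ∈ Finset.Iio i, coatesP r k) /
      (1 - ∑ k ∈ Finset.Iic i, coatesP r k)) := by
  rw [one_sub_sum_Iio_coatesP, one_sub_sum_Iic_coatesP, ← exp_sub, log_exp,
    ← Finset.add_sum_Iio_eq_sum_Iic]
  ring

end

theorem coatesP_injective (B : ℕ) : Function.Injective (coatesP (B := B)) := by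
  intro r r' h
  funext i
  rw [eq_log_one_sub_sum_coatesP_div r i, eq_log_one_sub_sum_coatesP_div r' i, h]

theorem coates_correction_inverts_general {B : ℕ} (r : Fin B → ℝ) :
    (∀ i : Fin B,
        0 < 1 - ∑ k ∈ Finset.Iic i, coatesP r k ∧
        r i = log ((1 - ∑ k ∈ Finset.Iio i, coatesP r k) /
          (1 - ∑ k ∈ Finset.Iic i, coatesP r k))) ∧
      Function.Injective (coatesP (B := B)) :=
  ⟨fun i => ⟨one_sub_sum_Iic_coatesP_pos r i, eq_log_one_sub_sum_coatesP_div r i⟩,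
    coatesP_injective B⟩

/-- For strictly positive `r`, the cumulative detection
probabilities satisfy `1 − ∑_{k≤i} p k > 0` and
`r i = ln((1 − ∑_{k<i} p k)/(1 − ∑_{k≤i} p k))` (Coates correction);
in particular `r ↦ p` is injective on `(0,∞)^B`. -/
theorem coates_correction_inverts
    (B : ℕ) (hB : 1 ≤ B) (r : Fin B → ℝ) (hr : ∀ i, 0 < r i) :
    (∀ i : Fin B,
        0 < 1 - ∑ k ∈ Finset.Iic i, coatesP r k ∧
        r i = Real.log ((1 - ∑ k ∈ Finset.Iio i, coatesP r k) /
          (1 - ∑ k ∈ Finset.Iic i, coatesP r k))) ∧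
      Set.InjOn (coatesP (B := B)) {r | ∀ i, 0 < r i} := by
  have ⟨correction, injective⟩ := coates_correction_inverts_general r
  exact ⟨correction, injective.injOn⟩
end

section
/- Let B ≥ 1, let r_1, …, r_B be strictly positive reals, and define p_i = (1 − e^{−r_i}) exp(−∑_{k=1}^{i−1} r_k). Then the sequence of ratios p_i / r_i is non-increasing in i: for all 1 ≤ i < B, p_{i+1}/r_{i+1} ≤ p_i/r_i. In particular, min_{1 ≤ i ≤ B} p_i/r_i = p_B/r_B. -/
open Real

/-!
Since `x * exp (-x) ≤ 1 - exp (-x) ≤ x`, each ratio `p i / r i` lies between two consecutive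
values of the survival function `n ↦ exp (-∑ k < n, r k)`, namely those at `i + 1` and at `i`.
Consecutive ratios are therefore separated by the value at `i + 1`.
-/

/-- The probability that the first photon arrives in bin `i`, when the photon counts of the bins
are independent Poisson variables with means `r 0, r 1, …`. Bins are indexed from `0`. -/
noncomputable def detectionProb (r : ℕ → ℝ) (i : ℕ) : ℝ :=
  (1 - exp (-r i)) * exp (-∑ k ∈ Finset.range i, r k)

theorem mul_exp_neg_le_one_sub_exp_neg (x : ℝ) : x * exp (-x) ≤ 1 - exp (-x) := by
  have add_one_mul_le : (x + 1) * exp (-x) ≤ 1 :=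
    calc (x + 1) * exp (-x) ≤ exp x * exp (-x) := by gcongr; exact add_one_le_exp x
      _ = 1 := by rw [← exp_add, add_neg_cancel, exp_zero]
  linarith

section DetectionProb

variable {r : ℕ → ℝ} {i : ℕ}

theorem detectionProb_div_le_exp_neg_sum_range (hi : 0 < r i) :
    detectionProb r i / r i ≤ exp (-∑ k ∈ Finset.range i, r k) := by
  rw [div_le_iff₀' hi, detectionProb]
  gcongr
  exact sub_le_comm.mp (one_sub_le_exp_neg (r i))

theorem exp_neg_sum_range_succ_le_detectionProb_div (hi : 0 < r i) :
    exp (-∑ k ∈ Finset.range (i + 1), r k) ≤ detectionProb r i / r i := by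
  rw [le_div_iff₀' hi, Finset.sum_range_succ_comm, neg_add, exp_add, ← mul_assoc, detectionProb]
  gcongr
  exact mul_exp_neg_le_one_sub_exp_neg (r i)

theorem detectionProb_div_succ_le (hi : 0 < r i) (hi_succ : 0 < r (i + 1)) :
    detectionProb r (i + 1) / r (i + 1) ≤ detectionProb r i / r i :=
  (detectionProb_div_le_exp_neg_sum_range hi_succ).trans
    (exp_neg_sum_range_succ_le_detectionProb_div hi)

theorem antitoneOn_detectionProb_div {s : Set ℕ} (hs : s.OrdConnected) (hr : ∀ i ∈ s, 0 < r i) :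
    AntitoneOn (fun i ↦ detectionProb r i / r i) s :=
  antitoneOn_of_add_one_le hs fun i _ hi hi_succ ↦
    detectionProb_div_succ_le (hr i hi) (hr (i + 1) hi_succ)

end DetectionProb

/-- For strictly positive bin intensities `r` and detection
probabilities `p i = (1 − e^{−r i}) exp(−∑_{k<i} r k)`, the ratios `p i / r i`
are non-increasing in the bin index; in particular the minimum ratio is
attained at the last bin (index `B − 1` in `0`-based indexing). -/
theorem bin_receptivity_ratio_antitone
    (B : ℕ) (hB : 1 ≤ B) (r : ℕ → ℝ) (hr : ∀ i, i < B → 0 < r i)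
    (p : ℕ → ℝ)
    (hp : ∀ i, i < B →
      p i = (1 - Real.exp (-(r i))) * Real.exp (-(∑ k ∈ Finset.range i, r k))) :
    (∀ i, i + 1 < B → p (i + 1) / r (i + 1) ≤ p i / r i) ∧
      (∀ i, i < B → p (B - 1) / r (B - 1) ≤ p i / r i) := by
  have ratio_eq : Set.EqOn (fun i ↦ detectionProb r i / r i) (fun i ↦ p i / r i) (Set.Iio B) :=
    fun i hi ↦ congrArg (· / r i) (hp i hi).symm
  have ratio_antitone : AntitoneOn (fun i ↦ p i / r i) (Set.Iio B) :=
    (antitoneOn_detectionProb_div Set.ordConnected_Iio hr).congr ratio_eq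
  constructor
  · intro i hi
    exact ratio_antitone (i.lt_succ_self.trans hi) hi i.le_succ
  · intro i hi
    exact ratio_antitone hi (Nat.sub_one_lt_of_lt hi) (Nat.le_sub_one_of_lt hi)
end

section
/- Let B ≥ 2 be an integer and Φ > 0. The function g : (0,∞) → ℝ defined by g(Υ) = B (1 − e^{−ΥΦ}) e^{−(B−1) ΥΦ} attains a unique global maximum at Υ* = (1/Φ) ln(B/(B−1)), and the maximum value is g(Υ*) = ((B−1)/B)^{B−1}; that is, g(Υ) < g(Υ*) for every Υ > 0 with Υ ≠ Υ*. -/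
open Real

/-!
Measure the attenuation from its optimal value `Υ*` by `s = (Υ - Υ*) Φ`, and put `p = B - 1`. As
`exp (-Υ* Φ) = p / B`, the receptivity is
`g Υ = (1 + p (1 - exp (-s))) * exp (-p s) * g Υ*`.
The factor in front of `g Υ*` is less than `1` for `s ≠ 0`, by two uses of `1 + u ≤ exp u`:
`1 + p (1 - exp (-s)) < 1 + p s ≤ exp (p s)`.
-/

theorem one_add_mul_one_sub_exp_neg_lt_exp_mul {p s : ℝ} (hp : 0 < p) (hs : s ≠ 0) :
    1 + p * (1 - exp (-s)) < exp (p * s) := by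
  have one_sub_exp_lt : 1 - exp (-s) < s := by
    linarith [add_one_lt_exp (neg_ne_zero.mpr hs)]
  calc 1 + p * (1 - exp (-s)) < 1 + p * s := by gcongr
    _ = p * s + 1 := add_comm _ _
    _ ≤ exp (p * s) := add_one_le_exp _

/-- The receptivity `C_B(Υ)` of the last of `B` time bins at background flux `Φ` and attenuation
`Υ`. The number of bins is allowed to be an arbitrary real number. -/
noncomputable def lastBinReceptivity (B Φ Υ : ℝ) : ℝ :=
  B * (1 - exp (-(Υ * Φ))) * exp (-((B - 1) * (Υ * Φ)))

/-- The attenuation `Υ*` that maximizes the receptivity of the last of `B` bins at background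
flux `Φ`; meaningful for `1 < B` and `Φ ≠ 0`. -/
noncomputable def optimalAttenuation (B Φ : ℝ) : ℝ :=
  (1 / Φ) * log (B / (B - 1))

section

variable {B Φ : ℝ}

theorem exp_neg_optimalAttenuation_mul (hB : 1 < B) (hΦ : Φ ≠ 0) :
    exp (-(optimalAttenuation B Φ * Φ)) = (B - 1) / B := by
  have ratio_pos : 0 < B / (B - 1) := div_pos (by linarith) (by linarith)
  have attenuation_mul : optimalAttenuation B Φ * Φ = log (B / (B - 1)) := by
    unfold optimalAttenuation
    field_simp
  rw [attenuation_mul, exp_neg, exp_log ratio_pos, inv_div]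

theorem lastBinReceptivity_optimalAttenuation (hB : 1 < B) (hΦ : Φ ≠ 0) :
    lastBinReceptivity B Φ (optimalAttenuation B Φ) = ((B - 1) / B) ^ (B - 1) := by
  have exp_eq_rpow : exp (-((B - 1) * (optimalAttenuation B Φ * Φ))) =
      ((B - 1) / B) ^ (B - 1) := by
    rw [← exp_neg_optimalAttenuation_mul hB hΦ, ← exp_mul, neg_mul, mul_comm (B - 1)]
  have prefactor_eq_one : B * (1 - (B - 1) / B) = 1 := by
    field_simp
    ring
  rw [lastBinReceptivity, exp_eq_rpow, exp_neg_optimalAttenuation_mul hB hΦ, prefactor_eq_one,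
    one_mul]

theorem lastBinReceptivity_optimalAttenuation_pos (hB : 1 < B) (hΦ : Φ ≠ 0) :
    0 < lastBinReceptivity B Φ (optimalAttenuation B Φ) := by
  rw [lastBinReceptivity_optimalAttenuation hB hΦ]
  exact rpow_pos_of_pos (div_pos (by linarith) (by linarith)) _

theorem lastBinReceptivity_optimalAttenuation_add (hB : 1 < B) (hΦ : Φ ≠ 0) (δ : ℝ) :
    lastBinReceptivity B Φ (optimalAttenuation B Φ + δ) =
      (1 + (B - 1) * (1 - exp (-(δ * Φ)))) * exp (-((B - 1) * (δ * Φ))) *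
        lastBinReceptivity B Φ (optimalAttenuation B Φ) := by
  have exp_add_mul : exp (-((optimalAttenuation B Φ + δ) * Φ)) =
      (B - 1) / B * exp (-(δ * Φ)) := by
    rw [add_mul, neg_add, exp_add, exp_neg_optimalAttenuation_mul hB hΦ]
  have exp_mul_add_mul : exp (-((B - 1) * ((optimalAttenuation B Φ + δ) * Φ))) =
      exp (-((B - 1) * (optimalAttenuation B Φ * Φ))) * exp (-((B - 1) * (δ * Φ))) := by
    rw [add_mul, mul_add, neg_add, exp_add]
  simp only [lastBinReceptivity, exp_add_mul, exp_mul_add_mul,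
    exp_neg_optimalAttenuation_mul hB hΦ]
  field_simp
  ring

theorem last_bin_receptivity_unique_max_general (hB : 1 < B) (hΦ : Φ ≠ 0) :
    lastBinReceptivity B Φ (optimalAttenuation B Φ) = ((B - 1) / B) ^ (B - 1) ∧
      ∀ Υ, Υ ≠ optimalAttenuation B Φ →
        lastBinReceptivity B Φ Υ < lastBinReceptivity B Φ (optimalAttenuation B Φ) := by
  refine ⟨lastBinReceptivity_optimalAttenuation hB hΦ, fun Υ hΥ ↦ ?_⟩
  obtain ⟨δ, rfl⟩ : ∃ δ, Υ = optimalAttenuation B Φ + δ := ⟨_, (add_sub_cancel _ _).symm⟩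
  have hδ : δ * Φ ≠ 0 := mul_ne_zero (by simpa using hΥ) hΦ
  have factor_lt_one :
      (1 + (B - 1) * (1 - exp (-(δ * Φ)))) * exp (-((B - 1) * (δ * Φ))) < 1 := by
    rw [exp_neg ((B - 1) * _), ← div_eq_mul_inv, div_lt_one (exp_pos _)]
    exact one_add_mul_one_sub_exp_neg_lt_exp_mul (sub_pos.mpr hB) hδ
  rw [lastBinReceptivity_optimalAttenuation_add hB hΦ]
  exact mul_lt_of_lt_one_left (lastBinReceptivity_optimalAttenuation_pos hB hΦ) factor_lt_one

end

/-- For `B ≥ 2` and background flux `Φ > 0`, the last-bin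
receptivity `g(Υ) = B (1 − e^{−ΥΦ}) e^{−(B−1)ΥΦ}` attains a unique global
maximum over `Υ ∈ (0,∞)` at `Υ* = (1/Φ) ln(B/(B−1))`, with maximum value
`((B−1)/B)^{B−1}`. -/
theorem last_bin_receptivity_unique_max
    (B : ℕ) (hB : 2 ≤ B) (Φ : ℝ) (hΦ : 0 < Φ)
    (g : ℝ → ℝ)
    (hg : ∀ Υ, g Υ = B * (1 - Real.exp (-(Υ * Φ))) *
      Real.exp (-(((B : ℝ) - 1) * (Υ * Φ))))
    (Υstar : ℝ) (hstar : Υstar = (1 / Φ) * Real.log ((B : ℝ) / ((B : ℝ) - 1))) :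
    g Υstar = (((B : ℝ) - 1) / (B : ℝ)) ^ (B - 1) ∧
      ∀ Υ, 0 < Υ → Υ ≠ Υstar → g Υ < g Υstar := by
  obtain rfl : g = lastBinReceptivity B Φ := funext hg
  rw [hstar, ← rpow_natCast, Nat.cast_pred (by lia)]
  exact (last_bin_receptivity_unique_max_general (Nat.one_lt_cast.mpr hB) hΦ.ne').imp_right
    fun hlt Υ _ ↦ hlt Υ
end

section
/- Let B ≥ 2 be an integer, Φ > 0, and define C_i(Υ) = B (1 − e^{−ΥΦ}) e^{−(i−1) ΥΦ} for 1 ≤ i ≤ B and Υ > 0. Then the quantity min_{1 ≤ i ≤ B} C_i(Υ) is uniquely maximized over Υ ∈ (0,∞) at Υ^opt = (1/Φ) ln(B/(B−1)): for every Υ > 0 with Υ ≠ Υ^opt, min_{1 ≤ i ≤ B} C_i(Υ) < min_{1 ≤ i ≤ B} C_i(Υ^opt). -/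
open Real

/-!
The receptivities decrease in the bin index, so the minimum is attained in the last bin, where it
equals `B * ((1 - x) * x ^ p)` with `x = exp (-(Υ * Φ))` and `p = B - 1`. Bernoulli's inequality
`1 + (p + 1) * s ≤ (1 + s) ^ (p + 1)`, strict for `s ≠ 0`, at `1 + s = p / (p + 1) / x` says exactly
that `(1 - x) * x ^ p` has its unique maximum at `x = p / (p + 1)`.
-/

theorem inf'_range_eq_of_antitone {α : Type*} [SemilatticeInf α] {f : ℕ → α} (hf : Antitone f)
    {n : ℕ} (hn : (Finset.range n).Nonempty) : (Finset.range n).inf' hn f = f (n - 1) := by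
  have hn₀ : n ≠ 0 := Finset.nonempty_range_iff.mp hn
  refine le_antisymm (Finset.inf'_le f (Finset.mem_range.mpr (by omega))) ?_
  refine Finset.le_inf' hn f fun i hi => hf ?_
  exact Nat.le_sub_one_of_lt (Finset.mem_range.mp hi)

theorem one_sub_mul_rpow_lt_of_ne {p x : ℝ} (hp : 0 < p) (hx : 0 < x) (hne : x ≠ p / (p + 1)) :
    (1 - x) * x ^ p < (1 - p / (p + 1)) * (p / (p + 1)) ^ p := by
  set y := p / (p + 1) with hy
  have hy₀ : 0 < y := by positivity
  have hyp : (p + 1) * y = p := by rw [hy]; field_simp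
  have bernoulli : 1 + (p + 1) * (y / x - 1) < (y / x) ^ (p + 1) := by
    have hs : y / x - 1 ≠ 0 := sub_ne_zero.mpr fun h => hne ((div_eq_one_iff_eq hx.ne').mp h).symm
    have hs₁ : -1 ≤ y / x - 1 := by linarith [div_pos hy₀ hx]
    simpa only [add_sub_cancel] using
      one_add_mul_self_lt_rpow_one_add hs₁ hs (lt_add_of_pos_left 1 hp)
  refine lt_of_mul_lt_mul_left ?_ hp.le
  calc p * ((1 - x) * x ^ p) = (1 + (p + 1) * (y / x - 1)) * x ^ (p + 1) := by
        rw [rpow_add_one hx.ne']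
        field_simp
        linear_combination -hyp
    _ < (y / x) ^ (p + 1) * x ^ (p + 1) := by gcongr
    _ = y ^ (p + 1) := by rw [← mul_rpow (by positivity) hx.le, div_mul_cancel₀ y hx.ne']
    _ = p * ((1 - y) * y ^ p) := by
        rw [rpow_add_one hy₀.ne']
        linear_combination y ^ p * hyp

/-- The receptivity of bin `i`, counted from `0`, out of `B` bins, as a function of the attenuated
flux `t = Υ * Φ` per bin. -/
noncomputable def binReceptivity (B : ℕ) (t : ℝ) (i : ℕ) : ℝ :=
  B * (1 - exp (-t)) * exp (-(i * t))

theorem binReceptivity_antitone (B : ℕ) {t : ℝ} (ht : 0 ≤ t) : Antitone (binReceptivity B t) := by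
  intro i j hij
  have hcoeff : 0 ≤ B * (1 - exp (-t)) :=
    mul_nonneg B.cast_nonneg (sub_nonneg.mpr (exp_le_one_iff.mpr (neg_nonpos.mpr ht)))
  unfold binReceptivity
  gcongr

theorem binReceptivity_eq_mul_rpow (B : ℕ) (t : ℝ) (i : ℕ) :
    binReceptivity B t i = B * ((1 - exp (-t)) * exp (-t) ^ (i : ℝ)) := by
  rw [binReceptivity, ← exp_mul, mul_assoc, neg_mul, mul_comm t]

theorem binReceptivity_last_lt_of_ne {B : ℕ} (hB : 2 ≤ B) {t : ℝ}
    (hne : t ≠ log ((B : ℝ) / ((B : ℝ) - 1))) :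
    binReceptivity B t (B - 1) < binReceptivity B (log ((B : ℝ) / ((B : ℝ) - 1))) (B - 1) := by
  have hlast : ((B - 1 : ℕ) : ℝ) = B - 1 := Nat.cast_pred (by omega)
  have hB₁ : (1 : ℝ) < B := by exact_mod_cast hB
  have hpeak : exp (-log ((B : ℝ) / ((B : ℝ) - 1))) = ((B : ℝ) - 1) / ((B : ℝ) - 1 + 1) := by
    rw [← log_inv, inv_div, exp_log (div_pos (by linarith) (by linarith)), sub_add_cancel]
  have hexp_ne : exp (-t) ≠ ((B : ℝ) - 1) / ((B : ℝ) - 1 + 1) := by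
    rw [← hpeak]
    exact fun h => hne (neg_injective (exp_injective h))
  rw [binReceptivity_eq_mul_rpow, binReceptivity_eq_mul_rpow, hlast, hpeak]
  exact mul_lt_mul_of_pos_left
    (one_sub_mul_rpow_lt_of_ne (sub_pos.mpr hB₁) (exp_pos _) hexp_ne) (by positivity)

/-- For `B ≥ 2` bins and background flux `Φ > 0`, with bin
receptivities `C i Υ = B (1 − e^{−ΥΦ}) e^{−i·ΥΦ}` (in `0`-based indexing), the
minimum bin receptivity `min_{i<B} C i Υ` is uniquely maximized over
`Υ ∈ (0,∞)` at `Υ^opt = (1/Φ) ln(B/(B−1))`. -/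
theorem optimal_attenuation_maximizes_min_receptivity
    (B : ℕ) (hB : 2 ≤ B) (Φ : ℝ) (hΦ : 0 < Φ)
    (C : ℕ → ℝ → ℝ)
    (hC : ∀ i Υ, C i Υ = B * (1 - Real.exp (-(Υ * Φ))) *
      Real.exp (-((i : ℝ) * (Υ * Φ))))
    (Υopt : ℝ) (hopt : Υopt = (1 / Φ) * Real.log ((B : ℝ) / ((B : ℝ) - 1)))
    (Υ : ℝ) (hΥ : 0 < Υ) (hne : Υ ≠ Υopt) :
    (Finset.range B).inf' (Finset.nonempty_range_iff.mpr (by omega))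
        (fun i => C i Υ) <
      (Finset.range B).inf' (Finset.nonempty_range_iff.mpr (by omega))
        (fun i => C i Υopt) := by
  obtain rfl : C = fun i Υ => binReceptivity B (Υ * Φ) i := funext₂ hC
  have hflux : Υopt * Φ = log ((B : ℝ) / ((B : ℝ) - 1)) := by rw [hopt]; field_simp
  have hflux_nonneg : 0 ≤ Υopt * Φ := by
    have hB₁ : (1 : ℝ) < B := by exact_mod_cast hB
    rw [hflux]
    exact log_nonneg ((one_le_div (sub_pos.mpr hB₁)).mpr (by linarith))
  have hflux_ne : Υ * Φ ≠ Υopt * Φ := fun h => hne (mul_right_cancel₀ hΦ.ne' h)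
  rw [inf'_range_eq_of_antitone (binReceptivity_antitone B (by positivity)),
    inf'_range_eq_of_antitone (binReceptivity_antitone B hflux_nonneg), hflux]
  exact binReceptivity_last_lt_of_ne hB (hflux ▸ hflux_ne)
end

section
/- Let S and T be strictly positive reals. The function L : (0,∞) → ℝ defined by L(Φ) = (1 − e^{−Φ})^S · e^{−ΦT} attains a unique global maximum at Φ̂ = ln((S+T)/T); that is, L(Φ) < L(Φ̂) for every Φ > 0 with Φ ≠ Φ̂. -/
open Real

/-!
Put `y = exp (-Φ)`. Then `L Φ = (1 - y) ^ S * y ^ T` is a Bernoulli likelihood, a two-category case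
of the multinomial likelihood `∏ p i ^ c i`. By the strict weighted AM-GM inequality for the ratios
`p i / w i` with weights `w i = c i / ∑ c`, the latter has its unique maximum at the empirical
frequencies `p = w`, which here means `y = T / (S + T)`.
-/

section Multinomial

variable {ι : Type*} {s : Finset ι} {p : ι → ℝ}

theorem prod_rpow_lt_prod_rpow_self {w : ι → ℝ} (hw : ∀ i ∈ s, 0 < w i)
    (hw_sum : ∑ i ∈ s, w i = 1) (hp : ∀ i ∈ s, 0 ≤ p i) (hp_sum : ∑ i ∈ s, p i = 1)
    (hne : ∃ i ∈ s, p i ≠ w i) :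
    ∏ i ∈ s, p i ^ w i < ∏ i ∈ s, w i ^ w i := by
  have mean_ratio : ∑ i ∈ s, w i * (p i / w i) = 1 := by
    rw [← hp_sum]
    exact Finset.sum_congr rfl fun i hi ↦ mul_div_cancel₀ _ (hw i hi).ne'
  have exists_ratio_ne : ∃ i ∈ s, p i / w i ≠ ∑ j ∈ s, w j * (p j / w j) := by
    obtain ⟨i, hi, hpw⟩ := hne
    exact ⟨i, hi, by rwa [mean_ratio, ne_eq, div_eq_one_iff_eq (hw i hi).ne']⟩
  have prod_ratio_lt_one : ∏ i ∈ s, (p i / w i) ^ w i < 1 :=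
    mean_ratio ▸ (geom_mean_lt_arith_mean_weighted_iff_of_pos' s w (fun i ↦ p i / w i) hw hw_sum
      fun i hi ↦ div_nonneg (hp i hi) (hw i hi).le).mpr exists_ratio_ne
  have prod_self_pos : 0 < ∏ i ∈ s, w i ^ w i :=
    Finset.prod_pos fun i hi ↦ rpow_pos_of_pos (hw i hi) _
  rwa [Finset.prod_congr rfl fun i hi ↦ div_rpow (hp i hi) (hw i hi).le (w i),
    Finset.prod_div_distrib, div_lt_one prod_self_pos] at prod_ratio_lt_one

theorem prod_rpow_lt_prod_div_sum_rpow {c : ι → ℝ} (hc : ∀ i ∈ s, 0 < c i)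
    (hp : ∀ i ∈ s, 0 ≤ p i) (hp_sum : ∑ i ∈ s, p i = 1)
    (hne : ∃ i ∈ s, p i ≠ c i / ∑ j ∈ s, c j) :
    ∏ i ∈ s, p i ^ c i < ∏ i ∈ s, (c i / ∑ j ∈ s, c j) ^ c i := by
  set N := ∑ j ∈ s, c j with hN
  have hN_pos : 0 < N := Finset.sum_pos hc (hne.imp fun _ h ↦ h.1)
  have hw : ∀ i ∈ s, 0 < c i / N := fun i hi ↦ div_pos (hc i hi) hN_pos
  have hw_sum : ∑ i ∈ s, c i / N = 1 := by
    rw [← Finset.sum_div, ← hN, div_self hN_pos.ne']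
  have prod_rpow_div_rpow {q : ι → ℝ} (hq : ∀ i ∈ s, 0 ≤ q i) :
      (∏ i ∈ s, q i ^ (c i / N)) ^ N = ∏ i ∈ s, q i ^ c i := by
    rw [← finsetProd_rpow s _ fun i hi ↦ rpow_nonneg (hq i hi) _]
    exact Finset.prod_congr rfl fun i hi ↦ by
      rw [← rpow_mul (hq i hi), div_mul_cancel₀ _ hN_pos.ne']
  rw [← prod_rpow_div_rpow hp, ← prod_rpow_div_rpow fun i hi ↦ (hw i hi).le]
  exact rpow_lt_rpow (Finset.prod_nonneg fun i hi ↦ rpow_nonneg (hp i hi) _)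
    (prod_rpow_lt_prod_rpow_self hw hw_sum hp hp_sum hne) hN_pos

end Multinomial

theorem one_sub_rpow_mul_rpow_lt {a b y : ℝ} (ha : 0 < a) (hb : 0 < b) (hy₀ : 0 ≤ y)
    (hy₁ : y ≤ 1) (hne : y ≠ b / (a + b)) :
    (1 - y) ^ a * y ^ b < (1 - b / (a + b)) ^ a * (b / (a + b)) ^ b := by
  have one_sub_freq : 1 - b / (a + b) = a / (a + b) := by
    rw [one_sub_div (add_pos ha hb).ne', add_sub_cancel_right]
  rw [one_sub_freq]
  simpa [Fin.sum_univ_two, Fin.prod_univ_two] using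
    prod_rpow_lt_prod_div_sum_rpow (s := Finset.univ) (p := ![1 - y, y]) (c := ![a, b])
      (by simp [Fin.forall_fin_two, ha, hb]) (by simp [Fin.forall_fin_two, hy₀, hy₁])
      (by simp) ⟨1, Finset.mem_univ _, by simpa using hne⟩

/-- For `S, T > 0`, the likelihood
`L(Φ) = (1 − e^{−Φ})^S · e^{−ΦT}` attains a unique global maximum over
`Φ ∈ (0,∞)` at `Φ̂ = ln((S+T)/T)`: for every `Φ > 0` with `Φ ≠ Φ̂`,
`L(Φ) < L(Φ̂)`. -/
theorem background_flux_mle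
    (S T : ℝ) (hS : 0 < S) (hT : 0 < T)
    (L : ℝ → ℝ)
    (hL : ∀ Φ, L Φ = (1 - Real.exp (-Φ)) ^ S * Real.exp (-(Φ * T)))
    (Φhat : ℝ) (hΦhat : Φhat = Real.log ((S + T) / T)) :
    ∀ Φ, 0 < Φ → Φ ≠ Φhat → L Φ < L Φhat := by
  intro Φ hΦ hne
  have exp_neg_Φhat : exp (-Φhat) = T / (S + T) := by
    rw [hΦhat, exp_neg, exp_log (by positivity), inv_div]
  have exp_neg_ne : exp (-Φ) ≠ T / (S + T) := by
    rwa [← exp_neg_Φhat, exp_injective.ne_iff, ne_eq, neg_inj]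
  have L_eq (Ψ : ℝ) : L Ψ = (1 - exp (-Ψ)) ^ S * exp (-Ψ) ^ T := by
    rw [hL, ← neg_mul, exp_mul]
  rw [L_eq, L_eq, exp_neg_Φhat]
  exact one_sub_rpow_mul_rpow_lt hS hT (exp_nonneg _)
    (exp_le_one_iff.mpr (neg_nonpos.mpr hΦ.le)) exp_neg_ne
end
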